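/- Let g ∈ H^∞ and let 𝒮_0 = {z ∈ 𝔻 : B′(φ_j(z)) = 0 for some 0 ≤ j ≤ n−1} (a finite set). Then Γ(g) vanishes identically on 𝔻 if and only if there exist an open set Ω ⊂ 𝔻 ∖ 𝒮_0 such that 𝔻 ∖ Ω is discrete, and an integer m ≥ 2, such that for every z ∈ Ω the n-point set B^{-1}(B(z)) can be partitioned into subsets each of cardinality m on each of which g is constant. -/

import Mathlib

/-!
Let `N(z)` be the number of points `w` in the fiber of `z` with `g(w) = g(z)`. It is the order of
vanishing at `0` of the monic polynomial `valuePoly a g z = ∏ (X - (g(w) - g(z)))`, the product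
being over the fiber.

Away from the points whose fiber meets the critical set of `B`, the fiber is given by `n`
holomorphic branches (`exists_branches`), so the coefficients of `valuePoly` are holomorphic
there; being bounded, they are meromorphic on the whole disk
(`meromorphicOn_coeff_valuePoly`). By the identity theorem each coefficient either vanishes off a
discrete set or is nonzero off a discrete set. If `m` is the least index of the second kind, then
`N = m` off a discrete set `E`, which may be taken to contain the critical points. The saturation
`B⁻¹(B(E))` is discrete too (`saturation_discrete`), and on its complement `Ω` every fiber splits
into the level sets of `g`, each having `m` points (`count_eq_of_coeff`).

If `Γ(g) ≡ 0`, then `∏ (g(z) - g(φ_j(z))) = 0` at a point of `Ω`, whence `m ≥ 2`. Conversely, a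
partition into blocks of size at least `2` gives a second fiber point with the same value of `g`,
so `Γ(g) = 0` on `Ω`, and on the disk by continuity.
-/

open Complex Polynomial MeasureTheory Metric Set Filter Topology
open scoped Classical

noncomputable section

/-- The open unit disk in `ℂ`. -/
def uDisk : Set ℂ := Metric.ball 0 1

/-- The closed unit disk in `ℂ`. -/
def cDisk : Set ℂ := Metric.closedBall 0 1

/-- The finite Blaschke product with zero set `a 0, …, a (n-1)`:
`B(z) = ∏_j (a_j - z)/(1 - conj(a_j)·z)`. -/
def blaschke {n : ℕ} (a : Fin n → ℂ) (z : ℂ) : ℂ :=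
  ∏ j, (a j - z) / (1 - (starRingEnd ℂ) (a j) * z)

/-- The multiset of the `n` solutions (with multiplicity) `φ_0(z) = z, φ_1(z), …, φ_{n-1}(z)`
of `B(w) = B(z)`, realized as the roots of the polynomial equation
`∏_j (a_j - w) = B(z) · ∏_j (1 - conj(a_j)·w)`. -/
def fiberMS {n : ℕ} (a : Fin n → ℂ) (z : ℂ) : Multiset ℂ :=
  ((∏ j, (Polynomial.C (a j) - Polynomial.X)) -
    Polynomial.C (blaschke a z) *
      ∏ j, (1 - Polynomial.C ((starRingEnd ℂ) (a j)) * Polynomial.X)).roots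

/-- `𝒟(f)(z) = ∏_{j=1}^{n-1} (f(z) - f(φ_j(z)))`, where `φ_1(z), …, φ_{n-1}(z)` is the
fiber of `B` over `B(z)` with one copy of `z` removed.  In particular
`calD a id z = ∏_{j=1}^{n-1} (z - φ_j(z))`. -/
def calD {n : ℕ} (a : Fin n → ℂ) (f : ℂ → ℂ) (z : ℂ) : ℂ :=
  (((fiberMS a z).erase z).map (fun w => f z - f w)).prod

/-- `G` is (the holomorphic extension after removing singularities of) `Γ(f) = 𝒟(f)/𝒟`. -/
def IsGamma {n : ℕ} (a : Fin n → ℂ) (f G : ℂ → ℂ) : Prop :=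
  DifferentiableOn ℂ G uDisk ∧ ∀ z ∈ uDisk, G z * calD a id z = calD a f z

/-- `p`-th power integral mean of `f` on the circle of radius `r`. -/
def circMean (p : ℝ) (f : ℂ → ℂ) (r : ℝ) : ℝ :=
  ∫ θ in (0:ℝ)..(2 * Real.pi), ‖f ((r : ℂ) * Complex.exp ((θ : ℂ) * Complex.I))‖ ^ p

/-- The `H^p` norm of `f` (for `0 < p < ∞`). -/
def hpNorm (p : ℝ) (f : ℂ → ℂ) : ℝ :=
  (sSup {m : ℝ | ∃ r ∈ Set.Ico (0:ℝ) 1, m = circMean p f r}) ^ (1 / p)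

/-- Membership in the Hardy space `H^p`, `0 < p < ∞`: holomorphic on the disk with
uniformly bounded integral means. -/
def MemHp (p : ℝ) (f : ℂ → ℂ) : Prop :=
  DifferentiableOn ℂ f uDisk ∧ ∃ C : ℝ, ∀ r ∈ Set.Ico (0:ℝ) 1, circMean p f r ≤ C

/-- Membership in `H^∞`: bounded holomorphic functions on the disk. -/
def MemHinf (f : ℂ → ℂ) : Prop :=
  DifferentiableOn ℂ f uDisk ∧ ∃ C : ℝ, ∀ z ∈ uDisk, ‖f z‖ ≤ C

/-- The `H^∞` (sup) norm. -/
def hinfNorm (f : ℂ → ℂ) : ℝ := sSup {m : ℝ | ∃ z ∈ uDisk, m = ‖f z‖}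

/-- The algebra of all polynomials in the functions `F 0, …, F (m-1)`. -/
def algGen (m : ℕ) (F : Fin m → (ℂ → ℂ)) : Set (ℂ → ℂ) :=
  {h | ∃ P : MvPolynomial (Fin m) ℂ, ∀ z : ℂ, h z = MvPolynomial.eval (fun i => F i z) P}

/-- The algebra `ℂ[F,G]` of all polynomials in the two functions `F` and `G`. -/
def algGen2 (F G : ℂ → ℂ) : Set (ℂ → ℂ) := algGen 2 ![F, G]

/-- The (sequential) closure of `S` in `H^p`. -/
def hpClosure (p : ℝ) (S : Set (ℂ → ℂ)) : Set (ℂ → ℂ) :=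
  {f | MemHp p f ∧ ∃ u : ℕ → (ℂ → ℂ), (∀ k, u k ∈ S) ∧
    Filter.Tendsto (fun k => hpNorm p (fun z => f z - u k z)) Filter.atTop (nhds 0)}

/-- `S` has finite codimension in `H^p`: finitely many functions in `H^p` together with `S`
span all of `H^p`. -/
def FiniteCodimHp (p : ℝ) (S : Set (ℂ → ℂ)) : Prop :=
  ∃ (k : ℕ) (e : Fin k → (ℂ → ℂ)), (∀ i, MemHp p (e i)) ∧
    ∀ f, MemHp p f → ∃ (c : Fin k → ℂ) (s : ℂ → ℂ), s ∈ S ∧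
      ∀ z ∈ uDisk, f z = s z + ∑ i, c i * e i z

/-- Inner function: bounded by 1, holomorphic, radial limits of modulus 1 a.e. -/
def IsInner (f : ℂ → ℂ) : Prop :=
  DifferentiableOn ℂ f uDisk ∧ (∀ z ∈ uDisk, ‖f z‖ ≤ 1) ∧
  ∀ᵐ θ : ℝ ∂volume, ∃ l : ℂ, ‖l‖ = 1 ∧
    Filter.Tendsto (fun r : ℝ => f ((r : ℂ) * Complex.exp ((θ : ℂ) * Complex.I)))
      (nhdsWithin 1 (Set.Iio 1)) (nhds l)

/-- `J` divides `h`, with a quotient holomorphic on the disk. -/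
def InnerDivides (J h : ℂ → ℂ) : Prop :=
  ∃ k : ℂ → ℂ, DifferentiableOn ℂ k uDisk ∧ ∀ z ∈ uDisk, h z = J z * k z

/-- Outer function: a holomorphic function on the disk whose only inner divisors are
unimodular constants (i.e. whose inner part is a unimodular constant). -/
def IsOuter (h : ℂ → ℂ) : Prop :=
  DifferentiableOn ℂ h uDisk ∧
  ∀ J : ℂ → ℂ, IsInner J → InnerDivides J h →
    ∃ c : ℂ, ‖c‖ = 1 ∧ ∀ z ∈ uDisk, J z = c

/-- `I` is the inner part of `h`: `I` is inner and `h = I·F` with `F` outer. -/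
def IsInnerPartOf (I h : ℂ → ℂ) : Prop :=
  IsInner I ∧ ∃ F : ℂ → ℂ, IsOuter F ∧ ∀ z ∈ uDisk, h z = I z * F z

/-- Finite Blaschke product (up to a unimodular constant factor). -/
def IsFiniteBlaschke (f : ℂ → ℂ) : Prop :=
  ∃ (m : ℕ) (c : ℂ) (b : Fin m → ℂ), ‖c‖ = 1 ∧ (∀ i, b i ∈ uDisk) ∧
    ∀ z ∈ uDisk, f z = c * ∏ i, (b i - z) / (1 - (starRingEnd ℂ) (b i) * z)

/-- `h` has no singular inner factor: every zero-free inner divisor of `h` is a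
unimodular constant. -/
def NoSingularInnerFactor (h : ℂ → ℂ) : Prop :=
  ∀ J : ℂ → ℂ, IsInner J → (∀ z ∈ uDisk, J z ≠ 0) → InnerDivides J h →
    ∃ c : ℂ, ‖c‖ = 1 ∧ ∀ z ∈ uDisk, J z = c

/-! ### The fibers of the Blaschke product -/

/-- The polynomial in `w` expressing `B(w) = c`, with denominators cleared. -/
def fiberPoly {n : ℕ} (a : Fin n → ℂ) (c : ℂ) : ℂ[X] :=
  (∏ j, (Polynomial.C (a j) - Polynomial.X)) -
    Polynomial.C c * ∏ j, (1 - Polynomial.C ((starRingEnd ℂ) (a j)) * Polynomial.X)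

lemma fiberMS_eq {n : ℕ} (a : Fin n → ℂ) (z : ℂ) :
    fiberMS a z = (fiberPoly a (blaschke a z)).roots := rfl

lemma fiberPoly_eval {n : ℕ} (a : Fin n → ℂ) (c w : ℂ) :
    (fiberPoly a c).eval w =
      (∏ j, (a j - w)) - c * ∏ j, (1 - (starRingEnd ℂ) (a j) * w) := by
  simp [fiberPoly, Polynomial.eval_prod]

lemma mem_uDisk {z : ℂ} : z ∈ uDisk ↔ ‖z‖ < 1 := by simp [uDisk]

lemma isOpen_uDisk : IsOpen uDisk := isOpen_ball

lemma isConnected_uDisk : IsConnected uDisk :=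
  (convex_ball _ _).isConnected ⟨0, by simp⟩

/-- The identity behind the behaviour of a Blaschke factor inside, on and outside the circle. -/
lemma normSq_blaschke_factor (b w : ℂ) :
    ‖1 - (starRingEnd ℂ) b * w‖ ^ 2 - ‖b - w‖ ^ 2 = (1 - ‖b‖ ^ 2) * (1 - ‖w‖ ^ 2) := by
  simp only [← Complex.normSq_eq_norm_sq, Complex.normSq_apply, Complex.sub_re, Complex.sub_im,
    Complex.mul_re, Complex.mul_im, Complex.conj_re, Complex.conj_im, Complex.one_re,
    Complex.one_im]
  ring

lemma den_ne_zero {b w : ℂ} (hb : b ∈ uDisk) (hw : ‖w‖ ≤ 1) :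
    1 - (starRingEnd ℂ) b * w ≠ 0 := by
  intro h
  have h1 : ‖(starRingEnd ℂ) b * w‖ = 1 := by
    rw [← sub_eq_zero.mp h]; simp
  rw [norm_mul, Complex.norm_conj] at h1
  have := mem_uDisk.mp hb
  nlinarith [norm_nonneg b, norm_nonneg w]

lemma factor_norm_lt {b w : ℂ} (hb : b ∈ uDisk) (hw : w ∈ uDisk) :
    ‖(b - w) / (1 - (starRingEnd ℂ) b * w)‖ < 1 := by
  have hw' := mem_uDisk.mp hw
  have hb' := mem_uDisk.mp hb
  have h0 := norm_pos_iff.mpr (den_ne_zero hb hw'.le)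
  rw [norm_div, div_lt_one h0]
  have := normSq_blaschke_factor b w
  have h2 : 0 < (1 - ‖b‖ ^ 2) * (1 - ‖w‖ ^ 2) := by
    apply mul_pos <;> nlinarith [norm_nonneg b, norm_nonneg w]
  exact lt_of_pow_lt_pow_left₀ 2 h0.le (by linarith)

lemma factor_norm_le_of_one_le {b w : ℂ} (hb : b ∈ uDisk) (hw : 1 ≤ ‖w‖) :
    ‖1 - (starRingEnd ℂ) b * w‖ ≤ ‖b - w‖ := by
  have hb' := mem_uDisk.mp hb
  have := normSq_blaschke_factor b w
  have h2 : (1 - ‖b‖ ^ 2) * (1 - ‖w‖ ^ 2) ≤ 0 := by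
    apply mul_nonpos_of_nonneg_of_nonpos <;> nlinarith [norm_nonneg b, norm_nonneg w]
  exact le_of_sq_le_sq (by linarith) (norm_nonneg _)

section Fiber

variable {n : ℕ} {a : Fin n → ℂ}

lemma blaschke_norm_lt (hn : 2 ≤ n) (ha : ∀ j, a j ∈ uDisk) {z : ℂ} (hz : z ∈ uDisk) :
    ‖blaschke a z‖ < 1 := by
  rw [blaschke, norm_prod]
  have i0 : Fin n := ⟨0, lt_of_lt_of_le two_pos hn⟩
  rw [← Finset.mul_prod_erase _ _ (Finset.mem_univ i0)]
  refine mul_lt_one_of_nonneg_of_lt_one_left (norm_nonneg _) (factor_norm_lt (ha _) hz) ?_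
  exact Finset.prod_le_one (fun _ _ => norm_nonneg _) (fun j _ => (factor_norm_lt (ha j) hz).le)

lemma blaschke_mul_den (ha : ∀ j, a j ∈ uDisk) {w : ℂ} (hw : ‖w‖ ≤ 1) :
    blaschke a w * ∏ j, (1 - (starRingEnd ℂ) (a j) * w) = ∏ j, (a j - w) := by
  rw [blaschke, ← Finset.prod_mul_distrib]
  exact Finset.prod_congr rfl fun j _ => div_mul_cancel₀ _ (den_ne_zero (ha j) hw)

/-- A polynomial fiber over a value in the disk stays inside the disk, since
`|∏ (1 - conj(a_j) w)| ≤ |∏ (a_j - w)|` for `|w| ≥ 1`. -/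
lemma mem_uDisk_of_root (ha : ∀ j, a j ∈ uDisk) {c w : ℂ} (hc : ‖c‖ < 1)
    (h : (fiberPoly a c).eval w = 0) : w ∈ uDisk := by
  by_contra hw
  rw [mem_uDisk, not_lt] at hw
  rw [fiberPoly_eval, sub_eq_zero] at h
  have h1 : ‖∏ j, (1 - (starRingEnd ℂ) (a j) * w)‖ ≤ ‖∏ j, (a j - w)‖ := by
    rw [norm_prod, norm_prod]
    exact Finset.prod_le_prod (fun _ _ => norm_nonneg _)
      fun j _ => factor_norm_le_of_one_le (ha j) hw
  have h2 : 0 < ‖∏ j, (a j - w)‖ := by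
    rw [norm_pos_iff, Finset.prod_ne_zero_iff]
    intro j _ h0
    have := mem_uDisk.mp (ha j)
    rw [sub_eq_zero.mp h0] at this
    linarith
  have h3 := congrArg norm h
  rw [norm_mul] at h3
  nlinarith [norm_nonneg c]

lemma fiberPoly_eval_eq_zero_iff (ha : ∀ j, a j ∈ uDisk) {c w : ℂ} (hw : ‖w‖ ≤ 1) :
    (fiberPoly a c).eval w = 0 ↔ blaschke a w = c := by
  have hd : ∏ j, (1 - (starRingEnd ℂ) (a j) * w) ≠ 0 :=
    Finset.prod_ne_zero_iff.mpr fun j _ => den_ne_zero (ha j) hw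
  rw [fiberPoly_eval, ← blaschke_mul_den ha hw, ← sub_mul, mul_eq_zero, or_iff_left hd,
    sub_eq_zero]

/-- Because `a 0 = 0`, the denominator has degree below `n`. -/
lemma fiberPoly_natDegree (hn : 2 ≤ n) (ha0 : ∀ h : 0 < n, a ⟨0, h⟩ = 0) (c : ℂ) :
    (fiberPoly a c).natDegree = n := by
  have h1 : (∏ j, (Polynomial.C (a j) - Polynomial.X) : ℂ[X]).natDegree = n := by
    rw [Polynomial.natDegree_prod]
    · have : ∀ j, (Polynomial.C (a j) - Polynomial.X : ℂ[X]).natDegree = 1 := fun j => by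
        rw [← neg_sub, Polynomial.natDegree_neg, Polynomial.natDegree_X_sub_C]
      simp [this]
    · intro j _
      rw [← neg_sub, neg_ne_zero]
      exact Polynomial.X_sub_C_ne_zero _
  have h2 : (Polynomial.C c *
      ∏ j, (1 - Polynomial.C ((starRingEnd ℂ) (a j)) * Polynomial.X) : ℂ[X]).natDegree < n := by
    refine lt_of_le_of_lt (Polynomial.natDegree_C_mul_le _ _) ?_
    rw [← Finset.mul_prod_erase _ _ (Finset.mem_univ (⟨0, lt_of_lt_of_le two_pos hn⟩ : Fin n)), ha0]
    simp only [map_zero, zero_mul, sub_zero, one_mul]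
    refine lt_of_le_of_lt (Polynomial.natDegree_prod_le _ _) ?_
    refine lt_of_le_of_lt (Finset.sum_le_card_nsmul _ _ 1 fun j _ => ?_) ?_
    · compute_degree
    · simp; omega
  rw [fiberPoly, Polynomial.natDegree_sub_eq_left_of_natDegree_lt (by rw [h1]; exact h2), h1]

lemma fiberPoly_ne_zero (hn : 2 ≤ n) (ha0 : ∀ h : 0 < n, a ⟨0, h⟩ = 0) (c : ℂ) :
    fiberPoly a c ≠ 0 := by
  intro h
  have := fiberPoly_natDegree hn ha0 c
  rw [h, Polynomial.natDegree_zero] at this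
  omega

lemma mem_fiberMS (hn : 2 ≤ n) (ha : ∀ j, a j ∈ uDisk) (ha0 : ∀ h : 0 < n, a ⟨0, h⟩ = 0)
    {z w : ℂ} (hz : z ∈ uDisk) :
    w ∈ fiberMS a z ↔ w ∈ uDisk ∧ blaschke a w = blaschke a z := by
  rw [fiberMS_eq, Polynomial.mem_roots (fiberPoly_ne_zero hn ha0 _), Polynomial.IsRoot.def]
  constructor
  · intro h
    have hw := mem_uDisk_of_root ha (blaschke_norm_lt hn ha hz) h
    exact ⟨hw, (fiberPoly_eval_eq_zero_iff ha (mem_uDisk.mp hw).le).mp h⟩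
  · rintro ⟨hw, h⟩
    exact (fiberPoly_eval_eq_zero_iff ha (mem_uDisk.mp hw).le).mpr h

lemma card_fiberMS (hn : 2 ≤ n) (ha0 : ∀ h : 0 < n, a ⟨0, h⟩ = 0) (z : ℂ) :
    (fiberMS a z).card = n := by
  rw [fiberMS_eq, Polynomial.splits_iff_card_roots.mp (IsAlgClosed.splits _),
    fiberPoly_natDegree hn ha0]

lemma blaschke_analyticAt (ha : ∀ j, a j ∈ uDisk) {w : ℂ} (hw : ‖w‖ ≤ 1) :
    AnalyticAt ℂ (blaschke a) w := by
  unfold blaschke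
  refine Finset.analyticAt_fun_prod _ fun j _ => ?_
  exact AnalyticAt.div (by fun_prop) (by fun_prop) (den_ne_zero (ha j) hw)

lemma count_fiberMS_le_one (hn : 2 ≤ n) (ha : ∀ j, a j ∈ uDisk) (ha0 : ∀ h : 0 < n, a ⟨0, h⟩ = 0)
    {z w : ℂ} (hw : w ∈ uDisk) (hwz : blaschke a w = blaschke a z)
    (hd : deriv (blaschke a) w ≠ 0) :
    (fiberMS a z).count w ≤ 1 := by
  rw [fiberMS_eq, Polynomial.count_roots]
  by_contra hlt
  rw [not_le, Polynomial.one_lt_rootMultiplicity_iff_isRoot (fiberPoly_ne_zero hn ha0 _)] at hlt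
  have hw' := mem_uDisk.mp hw
  have hden : ∏ j, (1 - (starRingEnd ℂ) (a j) * w) ≠ 0 :=
    Finset.prod_ne_zero_iff.mpr fun j _ => den_ne_zero (ha j) hw'.le
  have hev : (fun v => (fiberPoly a (blaschke a z)).eval v) =ᶠ[𝓝 w]
      fun v => (blaschke a v - blaschke a z) * ∏ j, (1 - (starRingEnd ℂ) (a j) * v) := by
    filter_upwards [isOpen_uDisk.mem_nhds hw] with v hv
    rw [fiberPoly_eval, ← blaschke_mul_den ha (mem_uDisk.mp hv).le, sub_mul]
  have h1 := ((fiberPoly a (blaschke a z)).hasDerivAt w).congr_of_eventuallyEq hev.symm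
  have hD : DifferentiableAt ℂ (fun v => ∏ j, (1 - (starRingEnd ℂ) (a j) * v)) w := by fun_prop
  have h2 := (((blaschke_analyticAt ha hw'.le).differentiableAt.hasDerivAt).sub_const
    (blaschke a z)).mul hD.hasDerivAt
  have h3 := h1.unique h2
  have h4 : (fiberPoly a (blaschke a z)).derivative.eval w = 0 := hlt.2
  rw [h4, hwz, sub_self, zero_mul, add_zero] at h3
  exact mul_ne_zero hd hden h3.symm

lemma nodup_fiberMS (hn : 2 ≤ n) (ha : ∀ j, a j ∈ uDisk) (ha0 : ∀ h : 0 < n, a ⟨0, h⟩ = 0)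
    {z : ℂ} (hz : z ∈ uDisk)
    (hd : ∀ w ∈ uDisk, blaschke a w = blaschke a z → deriv (blaschke a) w ≠ 0) :
    (fiberMS a z).Nodup := by
  rw [Multiset.nodup_iff_count_le_one]
  intro w
  by_cases hw : w ∈ fiberMS a z
  · obtain ⟨h1, h2⟩ := (mem_fiberMS hn ha ha0 hz).mp hw
    exact count_fiberMS_le_one hn ha ha0 h1 h2 (hd w h1 h2)
  · rw [Multiset.count_eq_zero_of_notMem hw]
    exact zero_le_one

/-! ### Saturation of discrete sets -/

/-- If `E` has no accumulation point in the disk, then neither has its saturation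
`B⁻¹(B(E))`: by compactness of the closed disk, fibers over points near `z` lie close to the
fiber of `z`. -/
lemma saturation_discrete (hn : 2 ≤ n) (ha : ∀ j, a j ∈ uDisk) (ha0 : ∀ h : 0 < n, a ⟨0, h⟩ = 0)
    {E : Set ℂ} (hE : ∀ z ∈ uDisk, ∀ᶠ w in 𝓝[≠] z, w ∉ E) {z : ℂ} (hz : z ∈ uDisk) :
    ∀ᶠ v in 𝓝[≠] z, ∀ w ∈ uDisk, blaschke a w = blaschke a v → w ∉ E := by
  set F : Finset ℂ := (fiberMS a z).toFinset with hF
  have memF : ∀ w, w ∈ F ↔ w ∈ uDisk ∧ blaschke a w = blaschke a z := fun w => by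
    rw [hF, Multiset.mem_toFinset, mem_fiberMS hn ha ha0 hz]
  -- an open neighbourhood of the fiber in which `E` can only meet the fiber itself
  set O : Set ℂ := {v | ∀ᶠ u in 𝓝 v, u ∈ E → u ∈ F} with hO
  have hOo : IsOpen O := isOpen_setOfPred_eventually_nhds
  have hFO : ∀ w ∈ F, w ∈ O := by
    intro w hw
    filter_upwards [eventually_nhdsWithin_iff.mp (hE w ((memF w).mp hw).1)] with u hu huE
    by_contra hne
    exact hu (fun h => hne (by rw [h]; exact hw)) huE
  have hKc : IsCompact (Metric.closedBall (0 : ℂ) 1 \ O) := (isCompact_closedBall _ _).diff hOo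
  have hBc : ContinuousOn (blaschke a) (Metric.closedBall (0 : ℂ) 1 \ O) := fun w hw =>
    (blaschke_analyticAt ha (by simpa using hw.1)).continuousAt.continuousWithinAt
  have hcl : IsClosed (blaschke a '' (Metric.closedBall (0 : ℂ) 1 \ O)) :=
    (hKc.image_of_continuousOn hBc).isClosed
  have hz0 : blaschke a z ∉ blaschke a '' (Metric.closedBall (0 : ℂ) 1 \ O) := by
    rintro ⟨w, ⟨hw1, hw2⟩, hw⟩
    have hw1' : ‖w‖ ≤ 1 := by simpa using hw1
    have hroot := (fiberPoly_eval_eq_zero_iff ha hw1').mpr hw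
    exact hw2 (hFO w ((memF w).mpr
      ⟨mem_uDisk_of_root ha (blaschke_norm_lt hn ha hz) hroot, hw⟩))
  have ev1 : ∀ᶠ v in 𝓝 z, blaschke a v ∉ blaschke a '' (Metric.closedBall (0 : ℂ) 1 \ O) :=
    (blaschke_analyticAt ha (mem_uDisk.mp hz).le).continuousAt.eventually
      (hcl.isOpen_compl.mem_nhds hz0)
  have ev2 : ∀ᶠ v in 𝓝 z, v ∉ F.erase z :=
    (F.erase z).finite_toSet.isClosed.isOpen_compl.mem_nhds (by simp)
  rw [eventually_nhdsWithin_iff]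
  filter_upwards [ev1, ev2, isOpen_uDisk.mem_nhds hz] with v h1 h2 hv hne w hw hwv hwE
  have hwO : w ∈ O := by
    by_contra hc
    exact h1 ⟨w, ⟨by simpa using (mem_uDisk.mp hw).le, hc⟩, hwv⟩
  have hwF : w ∈ F := hwO.self_of_nhds hwE
  exact h2 (Finset.mem_erase.mpr ⟨hne, (memF v).mpr ⟨hv, by rw [← hwv, ((memF w).mp hwF).2]⟩⟩)

lemma deriv_blaschke_eventually_ne_zero (hn : 2 ≤ n) (ha : ∀ j, a j ∈ uDisk)
    (ha0 : ∀ h : 0 < n, a ⟨0, h⟩ = 0) {z : ℂ} (hz : z ∈ uDisk) :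
    ∀ᶠ w in 𝓝[≠] z, deriv (blaschke a) w ≠ 0 := by
  have han : AnalyticOnNhd ℂ (deriv (blaschke a)) uDisk := fun w hw =>
    (blaschke_analyticAt ha (mem_uDisk.mp hw).le).deriv
  rcases (han z hz).eventually_eq_zero_or_eventually_ne_zero with h | h
  swap
  · exact h
  exfalso
  have h0 := han.eqOn_zero_of_preconnected_of_eventuallyEq_zero
    isConnected_uDisk.isPreconnected hz h
  have hconst : ∀ w ∈ uDisk, blaschke a w = blaschke a z := fun w hw =>
    isOpen_uDisk.is_const_of_deriv_eq_zero isConnected_uDisk.isPreconnected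
      (fun v hv => (blaschke_analyticAt ha
        (mem_uDisk.mp hv).le).differentiableAt.differentiableWithinAt) h0 hw hz
  -- a constant `B` would make the whole disk a single finite fiber
  have hfin : uDisk.Finite := (fiberMS a z).toFinset.finite_toSet.subset fun w hw => by
    simpa using (mem_fiberMS hn ha ha0 hz).mpr ⟨hw, hconst w hw⟩
  exact infinite_of_mem_nhds z (isOpen_uDisk.mem_nhds hz) hfin

/-! ### Local branches of `B⁻¹ ∘ B` -/

/-- Near a point whose fiber contains no critical point, the fiber is parametrized by `n`
holomorphic branches, indexed by the points of the central fiber. -/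
lemma exists_branches (hn : 2 ≤ n) (ha : ∀ j, a j ∈ uDisk) (ha0 : ∀ h : 0 < n, a ⟨0, h⟩ = 0)
    {z : ℂ} (hz : z ∈ uDisk)
    (hd : ∀ w ∈ uDisk, blaschke a w = blaschke a z → deriv (blaschke a) w ≠ 0) :
    ∃ φ : ℂ → ℂ → ℂ,
      (∀ w ∈ (fiberMS a z).toFinset, AnalyticAt ℂ (φ w) z ∧ φ w z = w) ∧
      ∀ᶠ v in 𝓝 z, fiberMS a v = (fiberMS a z).toFinset.val.map (fun w => φ w v) := by
  set F : Finset ℂ := (fiberMS a z).toFinset with hF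
  have memF : ∀ w, w ∈ F ↔ w ∈ uDisk ∧ blaschke a w = blaschke a z := fun w => by
    rw [hF, Multiset.mem_toFinset, mem_fiberMS hn ha ha0 hz]
  have hBz := blaschke_analyticAt ha (mem_uDisk.mp hz).le
  have key : ∀ w, ∃ φ : ℂ → ℂ, w ∈ F →
      AnalyticAt ℂ φ z ∧ φ z = w ∧ ∀ᶠ v in 𝓝 z, blaschke a (φ v) = blaschke a v := by
    intro w
    by_cases hw : w ∈ F
    swap
    · exact ⟨0, fun h => absurd h hw⟩
    obtain ⟨hw1, hw2⟩ := (memF w).mp hw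
    have hBw := blaschke_analyticAt ha (mem_uDisk.mp hw1).le
    have hdw := hd w hw1 hw2
    refine ⟨fun v => hBw.hasStrictDerivAt.localInverse _ _ _ hdw (blaschke a v), fun _ =>
      ⟨?_, ?_, ?_⟩⟩
    · refine AnalyticAt.fun_comp ?_ hBz
      rw [← hw2]
      exact hBw.analyticAt_localInverse hdw
    · simp only [← hw2]
      exact HasStrictFDerivAt.localInverse_apply_image ..
    · have h := hBw.hasStrictDerivAt.eventually_right_inverse hdw
      rw [hw2] at h
      exact hBz.continuousAt.eventually h
  choose φ hφ using key
  refine ⟨φ, fun w hw => ⟨(hφ w hw).1, (hφ w hw).2.1⟩, ?_⟩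
  have ev1 : ∀ᶠ v in 𝓝 z, ∀ w ∈ F, φ w v ∈ uDisk ∧ blaschke a (φ w v) = blaschke a v := by
    rw [Filter.eventually_all_finset]
    intro w hw
    obtain ⟨h1, h2, h3⟩ := hφ w hw
    refine Filter.Eventually.and ?_ h3
    refine h1.continuousAt.eventually (isOpen_uDisk.mem_nhds ?_)
    rw [h2]
    exact ((memF w).mp hw).1
  have ev2 : ∀ᶠ v in 𝓝 z, ∀ w ∈ F, ∀ w' ∈ F, w ≠ w' → φ w v ≠ φ w' v := by
    rw [Filter.eventually_all_finset]
    intro w hw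
    rw [Filter.eventually_all_finset]
    intro w' hw'
    by_cases hne : w = w'
    · exact Filter.Eventually.of_forall fun v h => absurd hne h
    · obtain ⟨h1, h2, -⟩ := hφ w hw
      obtain ⟨h1', h2', -⟩ := hφ w' hw'
      have := (h1.fun_sub h1').continuousAt.eventually_ne
        (by rw [h2, h2']; exact sub_ne_zero.mpr hne : φ w z - φ w' z ≠ 0)
      filter_upwards [this] with v hv _ using sub_ne_zero.mp hv
  filter_upwards [ev1, ev2, isOpen_uDisk.mem_nhds hz] with v h1 h2 hv
  symm
  refine Multiset.eq_of_le_of_card_le ?_ ?_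
  · rw [Multiset.le_iff_subset]
    · intro u hu
      obtain ⟨w, hw, rfl⟩ := Multiset.mem_map.mp hu
      exact (mem_fiberMS hn ha ha0 hv).mpr (h1 w hw)
    · refine Multiset.Nodup.map_on ?_ F.nodup
      intro w hw w' hw' h
      by_contra hne
      exact h2 w hw w' hw' hne h
  · rw [card_fiberMS hn ha0, Multiset.card_map, Finset.card_val, hF,
      Multiset.toFinset_card_of_nodup (nodup_fiberMS hn ha ha0 hz hd), card_fiberMS hn ha0]

/-! ### The polynomial of values of `g` on a fiber -/

/-- The polynomial whose roots are the differences `g(w) - g(z)`, for `w` in the fiber of `z`.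
Its order of vanishing at `0` is the number of fiber points at which `g` takes the value
`g(z)`. -/
def valuePoly {n : ℕ} (a : Fin n → ℂ) (g : ℂ → ℂ) (z : ℂ) : ℂ[X] :=
  (((fiberMS a z).map (fun w => g w - g z)).map
    (fun c => Polynomial.X - Polynomial.C c)).prod

lemma roots_valuePoly (g : ℂ → ℂ) (z : ℂ) :
    (valuePoly a g z).roots = (fiberMS a z).map (fun w => g w - g z) :=
  Polynomial.roots_multiset_prod_X_sub_C _

lemma analyticAt_coeff_prod {ι : Type*} (s : Finset ι) (f : ι → ℂ → ℂ) {z : ℂ}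
    (hf : ∀ i ∈ s, AnalyticAt ℂ (f i) z) (k : ℕ) :
    AnalyticAt ℂ (fun v => (∏ i ∈ s, (Polynomial.X - Polynomial.C (f i v))).coeff k) z := by
  induction s using Finset.induction_on generalizing k with
  | empty => simpa using analyticAt_const
  | insert i s hi ih =>
    simp only [Finset.prod_insert hi, sub_mul, Polynomial.coeff_sub, Polynomial.coeff_C_mul]
    have ih' := ih fun j hj => hf j (Finset.mem_insert_of_mem hj)
    refine AnalyticAt.fun_sub ?_ ((hf i (Finset.mem_insert_self _ _)).fun_mul (ih' k))
    cases k with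
    | zero => simpa using analyticAt_const
    | succ k => simpa only [Polynomial.coeff_X_mul] using ih' k

lemma norm_coeff_prod_le (s : Multiset ℂ) {M : ℝ} (hM : 0 ≤ M) (hs : ∀ c ∈ s, ‖c‖ ≤ M) (k : ℕ) :
    ‖((s.map (fun c => Polynomial.X - Polynomial.C c)).prod).coeff k‖ ≤ (1 + M) ^ s.card := by
  induction s using Multiset.induction_on generalizing k with
  | empty =>
    simp only [Multiset.map_zero, Multiset.prod_zero, Multiset.card_zero, pow_zero,
      Polynomial.coeff_one]
    split_ifs <;> simp
  | cons c s ih =>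
    have ih' := ih fun d hd => hs d (Multiset.mem_cons_of_mem hd)
    have hc := hs c (Multiset.mem_cons_self _ _)
    have hp : 0 ≤ (1 + M) ^ s.card := by positivity
    rw [Multiset.map_cons, Multiset.prod_cons, Multiset.card_cons, sub_mul,
      Polynomial.coeff_sub, Polynomial.coeff_C_mul, pow_succ]
    set p := (s.map (fun c => Polynomial.X - Polynomial.C c)).prod
    have h1 : ‖(Polynomial.X * p).coeff k‖ ≤ (1 + M) ^ s.card := by
      cases k with
      | zero => simpa using hp
      | succ k => simpa only [Polynomial.coeff_X_mul] using ih' k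
    have h2 : ‖c * p.coeff k‖ ≤ M * (1 + M) ^ s.card := by
      rw [norm_mul]
      exact mul_le_mul hc (ih' k) (norm_nonneg _) hM
    calc _ ≤ _ := norm_sub_le _ _
      _ ≤ (1 + M) ^ s.card + M * (1 + M) ^ s.card := add_le_add h1 h2
      _ = _ := by ring

lemma analyticAt_coeff_valuePoly (hn : 2 ≤ n) (ha : ∀ j, a j ∈ uDisk)
    (ha0 : ∀ h : 0 < n, a ⟨0, h⟩ = 0) {g : ℂ → ℂ} (hg : MemHinf g) {z : ℂ} (hz : z ∈ uDisk)
    (hd : ∀ w ∈ uDisk, blaschke a w = blaschke a z → deriv (blaschke a) w ≠ 0) (k : ℕ) :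
    AnalyticAt ℂ (fun v => (valuePoly a g v).coeff k) z := by
  obtain ⟨φ, hφ, hev⟩ := exists_branches hn ha ha0 hz hd
  have hga : ∀ w ∈ uDisk, AnalyticAt ℂ g w := fun w hw =>
    hg.1.analyticAt (isOpen_uDisk.mem_nhds hw)
  have h := analyticAt_coeff_prod (fiberMS a z).toFinset (fun w v => g (φ w v) - g v) (z := z)
    (fun w hw => by
      obtain ⟨h1, h2⟩ := hφ w hw
      refine AnalyticAt.fun_sub (AnalyticAt.fun_comp ?_ h1) (hga z hz)
      rw [h2]
      exact hga w ((mem_fiberMS hn ha ha0 hz).mp (Multiset.mem_toFinset.mp hw)).1) k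
  refine h.congr ?_
  filter_upwards [hev] with v hv
  rw [valuePoly, hv, Multiset.map_map, Multiset.map_map]
  rfl

/-- The coefficients are bounded, so the points whose fiber contains a critical point are
removable singularities. -/
lemma meromorphicOn_coeff_valuePoly (hn : 2 ≤ n) (ha : ∀ j, a j ∈ uDisk)
    (ha0 : ∀ h : 0 < n, a ⟨0, h⟩ = 0) {g : ℂ → ℂ} (hg : MemHinf g) (k : ℕ) :
    MeromorphicOn (fun v => (valuePoly a g v).coeff k) uDisk := by
  intro z hz
  set f : ℂ → ℂ := fun v => (valuePoly a g v).coeff k with hf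
  obtain ⟨C, hC⟩ := hg.2
  have hC0 : 0 ≤ C := (norm_nonneg _).trans (hC z hz)
  have hev := saturation_discrete hn ha ha0 (E := {w | deriv (blaschke a) w = 0})
    (fun z hz => deriv_blaschke_eventually_ne_zero hn ha ha0 hz) hz
  rw [eventually_nhdsWithin_iff] at hev
  have hs : uDisk ∩ {v | v ∈ ({z}ᶜ : Set ℂ) → ∀ w ∈ uDisk, blaschke a w = blaschke a v →
      w ∉ {w | deriv (blaschke a) w = 0}} ∈ 𝓝 z :=
    Filter.inter_mem (isOpen_uDisk.mem_nhds hz) hev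
  set s := uDisk ∩ {v | v ∈ ({z}ᶜ : Set ℂ) → ∀ w ∈ uDisk, blaschke a w = blaschke a v →
      w ∉ {w | deriv (blaschke a) w = 0}}
  have hdiff : DifferentiableOn ℂ f (s \ {z}) := fun v hv =>
    (analyticAt_coeff_valuePoly hn ha ha0 hg hv.1.1 (hv.1.2 hv.2)
      k).differentiableAt.differentiableWithinAt
  have hb : BddAbove (norm ∘ f '' (s \ {z})) := by
    refine ⟨(1 + (C + C)) ^ n, ?_⟩
    rintro _ ⟨v, hv, rfl⟩
    have h := norm_coeff_prod_le ((fiberMS a v).map (fun w => g w - g v)) (M := C + C)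
      (by positivity) (fun c hc => by
        obtain ⟨w, hw, rfl⟩ := Multiset.mem_map.mp hc
        exact (norm_sub_le _ _).trans
          (add_le_add (hC w ((mem_fiberMS hn ha ha0 hv.1.1).mp hw).1) (hC v hv.1.1))) k
    rw [Multiset.card_map, card_fiberMS hn ha0] at h
    exact h
  have han := (Complex.differentiableOn_update_limUnder_of_bddAbove hs hdiff hb).analyticAt hs
  refine han.meromorphicAt.congr ?_
  filter_upwards [self_mem_nhdsWithin] with v hv
  exact Function.update_of_ne hv _ _

lemma count_eq_of_coeff {g : ℂ → ℂ} {z : ℂ} {m : ℕ} (hm : (valuePoly a g z).coeff m ≠ 0)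
    (hlt : ∀ k < m, (valuePoly a g z).coeff k = 0) :
    ((fiberMS a z).filter (fun w => g w = g z)).card = m := by
  have h0 : valuePoly a g z ≠ 0 := fun h => hm (by rw [h]; simp)
  have h1 : (valuePoly a g z).natTrailingDegree = m :=
    le_antisymm (Polynomial.natTrailingDegree_le_of_ne_zero hm)
      (Polynomial.le_natTrailingDegree h0 hlt)
  rw [← Polynomial.rootMultiplicity_eq_natTrailingDegree', ← Polynomial.count_roots,
    roots_valuePoly, Multiset.count_map] at h1
  rw [← h1]
  congr 1
  refine Multiset.filter_congr fun w _ => ?_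
  rw [eq_comm (a := (0 : ℂ)), sub_eq_zero]

end Fiber

/-- **Theorem on identical vanishing of `Γ(g)`.** `Γ(g) ≡ 0` on `𝔻` iff
there are an open set `Ω ⊆ 𝔻 ∖ 𝒮₀` with `𝔻 ∖ Ω` discrete and an integer `m ≥ 2` such that
for every `z ∈ Ω` the fiber `B⁻¹(B(z))` is partitioned into subsets of cardinality `m`
on each of which `g` is constant. -/
theorem stmt13 {n : ℕ} (hn : 2 ≤ n) (a : Fin n → ℂ) (ha : ∀ j, a j ∈ uDisk)
    (ha0 : a ⟨0, by omega⟩ = 0)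
    (g Γg : ℂ → ℂ) (hg : MemHinf g) (hΓg : IsGamma a g Γg)
    (S0 : Set ℂ)
    (hS0 : S0 = {z | z ∈ uDisk ∧
      ∃ w ∈ uDisk, blaschke a w = blaschke a z ∧ deriv (blaschke a) w = 0}) :
    (∀ z ∈ uDisk, Γg z = 0) ↔
      ∃ (Ω : Set ℂ) (m : ℕ), IsOpen Ω ∧ Ω ⊆ uDisk \ S0 ∧ 2 ≤ m ∧
        (∀ z ∈ uDisk \ Ω, ∃ U ∈ nhds z, U ∩ (uDisk \ Ω) ⊆ {z}) ∧
        ∀ z ∈ Ω, ∃ Pa : Set (Set ℂ),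
          ⋃₀ Pa = {w | w ∈ uDisk ∧ blaschke a w = blaschke a z} ∧
          Pa.PairwiseDisjoint id ∧
          ∀ A ∈ Pa, A.ncard = m ∧ ∀ w₁ ∈ A, ∀ w₂ ∈ A, g w₁ = g w₂ := by
  subst hS0
  replace ha0 : ∀ h : 0 < n, a ⟨0, h⟩ = 0 := fun _ => ha0
  constructor
  · intro h0
    have hmer := meromorphicOn_coeff_valuePoly hn ha ha0 hg
    have hz0 : (0 : ℂ) ∈ uDisk := by simp [mem_uDisk]
    -- the coefficient of index `n` is the leading one, so some coefficient is generically nonzero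
    have hex : ∃ k, meromorphicOrderAt (fun v => (valuePoly a g v).coeff k) 0 ≠ ⊤ := by
      refine ⟨n, (meromorphicOrderAt_ne_top_iff_eventually_ne_zero (hmer n 0 hz0)).mpr ?_⟩
      refine Filter.Eventually.of_forall fun v => ?_
      have hmon : (valuePoly a g v).Monic :=
        Polynomial.monic_multiset_prod_of_monic _ _ fun c _ => Polynomial.monic_X_sub_C c
      have hdeg : (valuePoly a g v).natDegree = n := by
        rw [valuePoly, Polynomial.natDegree_multiset_prod_X_sub_C_eq_card, Multiset.card_map,
          card_fiberMS hn ha0]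
      have := hmon.coeff_natDegree
      rw [hdeg] at this
      rw [this]
      exact one_ne_zero
    set m := Nat.find hex with hm
    have hH1 : ∀ z ∈ uDisk, ∀ᶠ v in 𝓝[≠] z, (valuePoly a g v).coeff m ≠ 0 := fun z hz =>
      (meromorphicOrderAt_ne_top_iff_eventually_ne_zero (hmer m z hz)).mp
        ((hmer m).meromorphicOrderAt_ne_top_of_isPreconnected isConnected_uDisk.isPreconnected
          hz0 hz (Nat.find_spec hex))
    have hH2 : ∀ z ∈ uDisk, ∀ k < m, ∀ᶠ v in 𝓝[≠] z, (valuePoly a g v).coeff k = 0 := by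
      intro z hz k hk
      rw [← meromorphicOrderAt_eq_top_iff]
      by_contra hne
      exact Nat.find_min hex hk ((hmer k).meromorphicOrderAt_ne_top_of_isPreconnected
        isConnected_uDisk.isPreconnected hz hz0 hne)
    set E : Set ℂ := {w | deriv (blaschke a) w = 0 ∨ (valuePoly a g w).coeff m = 0 ∨
      ∃ k < m, (valuePoly a g w).coeff k ≠ 0} with hE
    have hEd : ∀ z ∈ uDisk, ∀ᶠ w in 𝓝[≠] z, w ∉ E := by
      intro z hz
      have hfin : ∀ᶠ v in 𝓝[≠] z, ∀ k ∈ Finset.range m, (valuePoly a g v).coeff k = 0 := by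
        rw [Filter.eventually_all_finset]
        exact fun k hk => hH2 z hz k (Finset.mem_range.mp hk)
      filter_upwards [deriv_blaschke_eventually_ne_zero hn ha ha0 hz, hH1 z hz, hfin]
        with w h1 h2 h3
      rintro (h | h | ⟨k, hk, h⟩)
      · exact h1 h
      · exact h2 h
      · exact h (h3 k (Finset.mem_range.mpr hk))
    set Ω : Set ℂ := {z | z ∈ uDisk ∧ ∀ w ∈ uDisk, blaschke a w = blaschke a z → w ∉ E} with hΩ
    have hΩev : ∀ z ∈ uDisk, ∀ᶠ v in 𝓝[≠] z, v ∈ Ω := by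
      intro z hz
      filter_upwards [saturation_discrete hn ha ha0 hEd hz,
        mem_nhdsWithin_of_mem_nhds (isOpen_uDisk.mem_nhds hz)] with v h1 h2
      exact ⟨h2, h1⟩
    have hreg : ∀ z ∈ Ω, ∀ w ∈ uDisk, blaschke a w = blaschke a z →
        deriv (blaschke a) w ≠ 0 := fun z hz w hw hwz hd => hz.2 w hw hwz (Or.inl hd)
    have hcard : ∀ z ∈ Ω, ((fiberMS a z).filter (fun w => g w = g z)).card = m := by
      intro z hz
      have hzE := hz.2 z hz.1 rfl
      simp only [hE, Set.mem_ofPred_eq, not_or, not_exists, not_and, not_not] at hzE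
      exact count_eq_of_coeff hzE.2.1 hzE.2.2
    refine ⟨Ω, m, ?_, ?_, ?_, ?_, ?_⟩
    · rw [isOpen_iff_mem_nhds]
      intro z hz
      filter_upwards [eventually_nhdsWithin_iff.mp (hΩev z hz.1)] with v hv
      by_cases h : v = z
      · rwa [h]
      · exact hv h
    · rintro z hz
      refine ⟨hz.1, ?_⟩
      rintro ⟨-, w, hw, hwz, hd⟩
      exact hreg z hz w hw hwz hd
    -- at a point of `Ω`, the vanishing product provides a second fiber point with the same value
    · obtain ⟨z, hz⟩ := (hΩev 0 hz0).exists
      have hnd := nodup_fiberMS hn ha ha0 hz.1 (hreg z hz)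
      have hcal : calD a g z = 0 := by rw [← hΓg.2 z hz.1, h0 z hz.1, zero_mul]
      rw [calD, Multiset.prod_eq_zero_iff, Multiset.mem_map] at hcal
      obtain ⟨w, hw, hgw⟩ := hcal
      rw [hnd.mem_erase_iff] at hw
      rw [← hcard z hz]
      have hsub : ({z, w} : Finset ℂ).val ≤ (fiberMS a z).filter (fun w => g w = g z) := by
        rw [Multiset.le_iff_subset (Finset.nodup _)]
        intro u hu
        rw [Finset.mem_val, Finset.mem_insert, Finset.mem_singleton] at hu
        rw [Multiset.mem_filter]
        rcases hu with rfl | rfl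
        · exact ⟨(mem_fiberMS hn ha ha0 hz.1).mpr ⟨hz.1, rfl⟩, rfl⟩
        · exact ⟨hw.2, (sub_eq_zero.mp hgw).symm⟩
      have := Multiset.card_le_card hsub
      rwa [Finset.card_val, Finset.card_pair (Ne.symm hw.1)] at this
    · rintro z ⟨hz, -⟩
      refine ⟨{v | v ∈ ({z}ᶜ : Set ℂ) → v ∈ Ω}, eventually_nhdsWithin_iff.mp (hΩev z hz), ?_⟩
      rintro v ⟨hv1, hv2⟩
      by_contra hne
      exact hv2.2 (hv1 hne)
    · intro z hz
      refine ⟨(fun w => {w' | (w' ∈ uDisk ∧ blaschke a w' = blaschke a z) ∧ g w' = g w}) ''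
        {w | w ∈ uDisk ∧ blaschke a w = blaschke a z}, ?_, ?_, ?_⟩
      · ext v
        simp only [Set.sUnion_image, Set.mem_iUnion, Set.mem_ofPred_eq]
        exact ⟨fun ⟨w, _, hv⟩ => hv.1, fun hv => ⟨v, hv, hv, rfl⟩⟩
      · rintro _ ⟨w, -, rfl⟩ _ ⟨w', -, rfl⟩ hne
        rw [Function.onFun, Set.disjoint_left]
        intro v hv hv'
        refine hne ?_
        have hgg : g w = g w' := hv.2.symm.trans hv'.2
        simp only [hgg]
      · rintro _ ⟨w, ⟨hw1, hw2⟩, rfl⟩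
        refine ⟨?_, fun w₁ h₁ w₂ h₂ => h₁.2.trans h₂.2.symm⟩
        have hwΩ : w ∈ Ω := ⟨hw1, fun u hu huw => hz.2 u hu (huw.trans hw2)⟩
        have hnd := nodup_fiberMS hn ha ha0 hw1 (hreg w hwΩ)
        have hset : {w' | (w' ∈ uDisk ∧ blaschke a w' = blaschke a z) ∧ g w' = g w} =
            (((fiberMS a w).filter (fun w' => g w' = g w)).toFinset : Set ℂ) := by
          ext v
          rw [Finset.mem_coe, Multiset.mem_toFinset, Multiset.mem_filter,
            mem_fiberMS hn ha ha0 hw1, hw2]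
          rfl
        simp only [hset]
        rw [Set.ncard_coe_finset, Multiset.toFinset_card_of_nodup (hnd.filter _), hcard w hwΩ]
  · rintro ⟨Ω, m, -, hsub, hm, hdisc, hpart⟩
    have hzero : ∀ z ∈ Ω, Γg z = 0 := by
      intro z hz
      obtain ⟨hzD, hzS⟩ := hsub hz
      obtain ⟨Pa, hun, -, hPa⟩ := hpart z hz
      have hzmem : z ∈ ⋃₀ Pa := by rw [hun]; exact ⟨hzD, rfl⟩
      obtain ⟨A, hA, hzA⟩ := hzmem
      obtain ⟨hAc, hAg⟩ := hPa A hA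
      obtain ⟨w, hwA, hwz⟩ := Set.exists_ne_of_one_lt_ncard (by omega : 1 < A.ncard) z
      have hw : w ∈ {w | w ∈ uDisk ∧ blaschke a w = blaschke a z} := by
        rw [← hun]; exact ⟨A, hA, hwA⟩
      have hwf : w ∈ (fiberMS a z).erase z :=
        (Multiset.mem_erase_of_ne hwz).mpr ((mem_fiberMS hn ha ha0 hzD).mpr hw)
      have hcal : calD a g z = 0 := by
        rw [calD, Multiset.prod_eq_zero_iff, Multiset.mem_map]
        exact ⟨w, hwf, by rw [hAg z hzA w hwA, sub_self]⟩
      have hnd := nodup_fiberMS hn ha ha0 hzD fun u hu huz hd => hzS ⟨hzD, u, hu, huz, hd⟩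
      have hid : calD a id z ≠ 0 := by
        rw [calD, Ne, Multiset.prod_eq_zero_iff, Multiset.mem_map]
        rintro ⟨u, hu, huz⟩
        exact (hnd.mem_erase_iff.mp hu).1 (sub_eq_zero.mp huz).symm
      have := hΓg.2 z hzD
      rw [hcal] at this
      exact (mul_eq_zero.mp this).resolve_right hid
    intro z hz
    by_cases hzΩ : z ∈ Ω
    · exact hzero z hzΩ
    obtain ⟨U, hU, hUs⟩ := hdisc z ⟨hz, hzΩ⟩
    have hev : ∀ᶠ v in 𝓝[≠] z, Γg v = 0 := by
      filter_upwards [mem_nhdsWithin_of_mem_nhds hU, self_mem_nhdsWithin,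
        mem_nhdsWithin_of_mem_nhds (isOpen_uDisk.mem_nhds hz)] with v h1 h2 h3
      refine hzero v ?_
      by_contra hv
      exact h2 (hUs ⟨h1, h3, hv⟩)
    have hc : ContinuousAt Γg z :=
      hΓg.1.continuousOn.continuousAt (isOpen_uDisk.mem_nhds hz)
    exact tendsto_nhds_unique (hc.tendsto.mono_left nhdsWithin_le_nhds)
      (tendsto_const_nhds.congr' (hev.mono fun v hv => hv.symm))
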